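/- Let (X,p) be a 0-complete partial metric space and T : X → X satisfy p(Tx,Ty) ≤ φ(p(x,y)) for all x,y ∈ X, where φ : [0,∞) → [0,∞) is increasing, f(t) = t - φ(t) is increasing with f^{-1} right continuous at 0, and lim_{n→∞} φ^n(t) = 0 for all t ≥ 0. Then T has a unique fixed point z ∈ X, p(z,z) = 0, and for each x ∈ X the sequence (T^n x) converges to z in the metric p^s. -/

import Mathlib

open Filter Topology

structure IsPartialMetric {X : Type*} (p : X → X → ℝ) : Prop where
  nonneg : ∀ x y, 0 ≤ p x y
  symm : ∀ x y, p x y = p y x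
  eq_of : ∀ x y, p x x = p x y → p y y = p x y → x = y
  self_le : ∀ x y, p x x ≤ p x y
  triangle : ∀ x y z, p x z + p y y ≤ p x y + p y z

/-- The associated metric pˢ(x,y) = 2 p(x,y) - p(x,x) - p(y,y). -/
def pS {X : Type*} (p : X → X → ℝ) (x y : X) : ℝ := 2 * p x y - p x x - p y y

/-- 0-completeness: every 0-Cauchy sequence (lim_{n,m} p(x_n,x_m) = 0) converges
wrt pˢ to a point z with p(z,z) = 0. -/
def IsZeroCompletePMS {X : Type*} (p : X → X → ℝ) : Prop :=
  ∀ x : ℕ → X, Tendsto (fun nm : ℕ × ℕ => p (x nm.1) (x nm.2)) atTop (𝓝 0) →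
    ∃ z : X, p z z = 0 ∧ Tendsto (fun n => pS p z (x n)) atTop (𝓝 0)

/-!
A point moved by at most `ε - φ ε` has a `T`-invariant ball of radius `ε`. Since `φ ε < ε`, and
since consecutive iterates of `T` approach each other, every orbit is eventually trapped in balls of
arbitrarily small radius, hence `0`-Cauchy. Its limit is fixed because `T` is nonexpansive, and the
bound `p (T^[n] x) (T^[n] z) ≤ φ^[n] (p x z)` makes every orbit converge to it.
-/

open Set Function

namespace IsPartialMetric

variable {X : Type*} {p : X → X → ℝ}

theorem le_add (hp : IsPartialMetric p) (x y z : X) : p x z ≤ p x y + p y z := by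
  linarith [hp.triangle x y z, hp.nonneg y y]

theorem eq_of_apply_eq_zero (hp : IsPartialMetric p) {x y : X} (hxy : p x y = 0) : x = y := by
  have hx : p x x = 0 := le_antisymm (hxy ▸ hp.self_le x y) (hp.nonneg x x)
  have hy : p y y = 0 := le_antisymm (hxy ▸ hp.symm x y ▸ hp.self_le y x) (hp.nonneg y y)
  exact hp.eq_of x y (hx.trans hxy.symm) (hy.trans hxy.symm)

theorem pS_comm (hp : IsPartialMetric p) (x y : X) : pS p x y = pS p y x := by
  simp only [pS, hp.symm x y]
  ring

theorem pS_nonneg (hp : IsPartialMetric p) (x y : X) : 0 ≤ pS p x y := by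
  have hy : p y y ≤ p x y := hp.symm x y ▸ hp.self_le y x
  unfold pS
  linarith [hp.self_le x y]

theorem pS_le_two_mul (hp : IsPartialMetric p) (x y : X) : pS p x y ≤ 2 * p x y := by
  unfold pS
  linarith [hp.nonneg x x, hp.nonneg y y]

theorem le_pS_add_self (hp : IsPartialMetric p) (x y : X) : p x y ≤ pS p x y + p y y := by
  unfold pS
  linarith [hp.self_le x y]

theorem tendsto_pS_zero_iff (hp : IsPartialMetric p) {ι : Type*} {l : Filter ι} {u : ι → X}
    {z : X} (hz : p z z = 0) :
    Tendsto (fun i => pS p (u i) z) l (𝓝 0) ↔ Tendsto (fun i => p (u i) z) l (𝓝 0) := by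
  constructor <;> intro h
  · refine squeeze_zero (fun i => hp.nonneg _ _) (fun i => ?_) h
    simpa only [hz, add_zero] using hp.le_pS_add_self (u i) z
  · refine squeeze_zero (fun i => hp.pS_nonneg _ _) (fun i => hp.pS_le_two_mul _ _) ?_
    simpa only [mul_zero] using h.const_mul 2

theorem tendsto_zero_of_forall_exists_le (hp : IsPartialMetric p) {u : ℕ → X}
    (hu : ∀ ε > 0, ∃ N, ∀ n ≥ N, p (u N) (u n) ≤ ε) :
    Tendsto (fun mn : ℕ × ℕ => p (u mn.1) (u mn.2)) atTop (𝓝 0) := by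
  rw [Metric.tendsto_atTop]
  intro ε hε
  obtain ⟨N, hN⟩ := hu (ε / 3) (by positivity)
  refine ⟨(N, N), fun ⟨m, n⟩ ⟨hm, hn⟩ => ?_⟩
  rw [Real.dist_0_eq_abs, abs_of_nonneg (hp.nonneg _ _)]
  calc p (u m) (u n) ≤ p (u N) (u m) + p (u N) (u n) :=
        hp.symm (u m) (u N) ▸ hp.le_add (u m) (u N) (u n)
    _ ≤ ε / 3 + ε / 3 := add_le_add (hN m hm) (hN n hn)
    _ < ε := by linarith

theorem isFixedPt_of_tendsto_iterate (hp : IsPartialMetric p) {T : X → X}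
    (hT : ∀ x y, p (T x) (T y) ≤ p x y) {x z : X}
    (hz : Tendsto (fun n => p (T^[n] x) z) atTop (𝓝 0)) : IsFixedPt T z := by
  have hbound (n : ℕ) : p (T z) z ≤ p (T^[n] x) z + p (T^[n + 1] x) z := by
    rw [iterate_succ_apply']
    calc p (T z) z ≤ p (T z) (T (T^[n] x)) + p (T (T^[n] x)) z := hp.le_add _ _ _
      _ ≤ p (T^[n] x) z + p (T (T^[n] x)) z := by
        gcongr
        exact hp.symm (T z) _ ▸ hT _ _
  have hsum := hz.add ((tendsto_add_atTop_iff_nat 1).2 hz)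
  rw [add_zero] at hsum
  exact hp.eq_of_apply_eq_zero (le_antisymm (ge_of_tendsto' hsum hbound) (hp.nonneg _ _))

end IsPartialMetric

/-- A comparison function in the sense of Matkowski: a monotone self-map of `[0, ∞)` whose iterates
tend to `0` pointwise. It is encoded as a real function constrained only on `Set.Ici 0`. -/
structure IsComparisonFunction (φ : ℝ → ℝ) : Prop where
  mapsTo : MapsTo φ (Ici 0) (Ici 0)
  monotoneOn : MonotoneOn φ (Ici 0)
  tendsto_iterate : ∀ t, 0 ≤ t → Tendsto (fun n => φ^[n] t) atTop (𝓝 0)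

namespace IsComparisonFunction

variable {φ : ℝ → ℝ} {t : ℝ}

theorem lt_self (hφ : IsComparisonFunction φ) (ht : 0 < t) : φ t < t := by
  by_contra! hle
  have hiter (n : ℕ) : t ≤ φ^[n] t := by
    induction n with
    | zero => exact le_rfl
    | succ n ih =>
      rw [iterate_succ_apply']
      exact hle.trans (hφ.monotoneOn ht.le (ht.le.trans ih) ih)
  exact ht.not_ge (ge_of_tendsto' (hφ.tendsto_iterate t ht.le) hiter)

theorem le_self (hφ : IsComparisonFunction φ) (ht : 0 ≤ t) : φ t ≤ t := by
  refine le_of_forall_gt_imp_ge_of_dense fun s hs => ?_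
  have hs0 : 0 < s := ht.trans_lt hs
  exact (hφ.monotoneOn ht hs0.le hs.le).trans (hφ.lt_self hs0).le

end IsComparisonFunction

/-- The contraction condition on `T` with respect to `p` and the gauge `φ`. -/
def IsPhiContraction {X : Type*} (p : X → X → ℝ) (φ : ℝ → ℝ) (T : X → X) : Prop :=
  ∀ x y, p (T x) (T y) ≤ φ (p x y)

namespace IsPhiContraction

variable {X : Type*} {p : X → X → ℝ} {φ : ℝ → ℝ} {T : X → X}

theorem iterate_le (hT : IsPhiContraction p φ T) (hp : IsPartialMetric p)
    (hφ : MonotoneOn φ (Ici 0)) (x y : X) (n : ℕ) :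
    p (T^[n] x) (T^[n] y) ≤ φ^[n] (p x y) := by
  induction n with
  | zero => exact le_rfl
  | succ n ih =>
    simp only [iterate_succ_apply']
    exact (hT _ _).trans (hφ (hp.nonneg _ _) ((hp.nonneg _ _).trans ih) ih)

theorem tendsto_iterate (hT : IsPhiContraction p φ T) (hp : IsPartialMetric p)
    (hφ : IsComparisonFunction φ) (x y : X) :
    Tendsto (fun n => p (T^[n] x) (T^[n] y)) atTop (𝓝 0) :=
  squeeze_zero (fun _ => hp.nonneg _ _) (hT.iterate_le hp hφ.monotoneOn x y)
    (hφ.tendsto_iterate _ (hp.nonneg x y))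

theorem tendsto_iterate_of_isFixedPt (hT : IsPhiContraction p φ T) (hp : IsPartialMetric p)
    (hφ : IsComparisonFunction φ) {z : X} (hz : IsFixedPt T z) (x : X) :
    Tendsto (fun n => p (T^[n] x) z) atTop (𝓝 0) := by
  simpa only [iterate_fixed hz] using hT.tendsto_iterate hp hφ x z

theorem eq_of_isFixedPt (hT : IsPhiContraction p φ T) (hp : IsPartialMetric p)
    (hφ : IsComparisonFunction φ) {w z : X} (hw : IsFixedPt T w) (hz : IsFixedPt T z) :
    w = z := by
  have hlim := hT.tendsto_iterate_of_isFixedPt hp hφ hz w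
  simp only [iterate_fixed hw] at hlim
  exact hp.eq_of_apply_eq_zero (tendsto_nhds_unique tendsto_const_nhds hlim)

theorem mapsTo_closedBall (hT : IsPhiContraction p φ T) (hp : IsPartialMetric p)
    (hφ : MonotoneOn φ (Ici 0)) {x : X} {ε : ℝ} (hx : p x (T x) ≤ ε - φ ε) :
    MapsTo T {y | p x y ≤ ε} {y | p x y ≤ ε} := fun y (hy : p x y ≤ ε) =>
  calc p x (T y) ≤ p x (T x) + p (T x) (T y) := hp.le_add _ _ _
    _ ≤ (ε - φ ε) + φ ε := by
      gcongr
      exact (hT x y).trans (hφ (hp.nonneg _ _) ((hp.nonneg _ _).trans hy) hy)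
    _ = ε := sub_add_cancel _ _

theorem exists_forall_iterate_le (hT : IsPhiContraction p φ T) (hp : IsPartialMetric p)
    (hφ : IsComparisonFunction φ) (x : X) {ε : ℝ} (hε : 0 < ε) :
    ∃ N, ∀ n ≥ N, p (T^[N] x) (T^[n] x) ≤ ε := by
  have hgap : 0 < ε - φ ε := sub_pos.2 (hφ.lt_self hε)
  obtain ⟨N, hN⟩ := ((hT.tendsto_iterate hp hφ x (T x)).eventually_le_const hgap).exists
  rw [← iterate_succ_apply, iterate_succ_apply'] at hN
  have hcenter : p (T^[N] x) (T^[N] x) ≤ ε :=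
    (hp.self_le _ _).trans (hN.trans (sub_le_self ε (hφ.mapsTo hε.le)))
  refine ⟨N, fun n hn => ?_⟩
  obtain ⟨k, rfl⟩ := Nat.exists_eq_add_of_le' hn
  rw [iterate_add_apply]
  exact (hT.mapsTo_closedBall hp hφ.monotoneOn hN).iterate k hcenter

theorem tendsto_iterate_prod (hT : IsPhiContraction p φ T) (hp : IsPartialMetric p)
    (hφ : IsComparisonFunction φ) (x : X) :
    Tendsto (fun mn : ℕ × ℕ => p (T^[mn.1] x) (T^[mn.2] x)) atTop (𝓝 0) :=
  hp.tendsto_zero_of_forall_exists_le fun _ => hT.exists_forall_iterate_le hp hφ x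

theorem exists_isFixedPt (hT : IsPhiContraction p φ T) (hp : IsPartialMetric p)
    (hcomp : IsZeroCompletePMS p) (hφ : IsComparisonFunction φ) [Nonempty X] :
    ∃ z, IsFixedPt T z ∧ p z z = 0 := by
  obtain ⟨x⟩ := ‹Nonempty X›
  obtain ⟨z, hz, hlim⟩ := hcomp (fun n => T^[n] x) (hT.tendsto_iterate_prod hp hφ x)
  simp only [hp.pS_comm z, hp.tendsto_pS_zero_iff hz] at hlim
  have hnonexp (x y : X) : p (T x) (T y) ≤ p x y := (hT x y).trans (hφ.le_self (hp.nonneg x y))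
  exact ⟨z, hp.isFixedPt_of_tendsto_iterate hnonexp hlim, hz⟩

end IsPhiContraction

theorem phi_contraction_zero_complete_general {X : Type*} [Nonempty X] {p : X → X → ℝ}
    (hp : IsPartialMetric p) (hcomp : IsZeroCompletePMS p) {T : X → X} {φ : ℝ → ℝ}
    (hφ : IsComparisonFunction φ) (hT : IsPhiContraction p φ T) :
    ∃ z : X, T z = z ∧ (∀ w : X, T w = w → w = z) ∧ p z z = 0 ∧
      ∀ x : X, Tendsto (fun n => pS p (T^[n] x) z) atTop (𝓝 0) := by
  obtain ⟨z, hfix, hz⟩ := hT.exists_isFixedPt hp hcomp hφ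
  exact ⟨z, hfix, fun w hw => hT.eq_of_isFixedPt hp hφ hw hfix, hz, fun x =>
    (hp.tendsto_pS_zero_iff hz).2 (hT.tendsto_iterate_of_isFixedPt hp hφ hfix x)⟩

theorem phi_contraction_zero_complete {X : Type*} [Nonempty X] {p : X → X → ℝ}
    (hp : IsPartialMetric p) (hcomp : IsZeroCompletePMS p) (T : X → X) (φ g : ℝ → ℝ)
    (hφ_nonneg : ∀ t : ℝ, 0 ≤ t → 0 ≤ φ t)
    (hφ_mono : ∀ s t : ℝ, 0 ≤ s → s ≤ t → φ s ≤ φ t)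
    (hf_mono : ∀ s t : ℝ, 0 ≤ s → s ≤ t → s - φ s ≤ t - φ t)
    (hg_left : ∀ s : ℝ, 0 ≤ s → g s - φ (g s) ≤ s)
    (hg_ge : ∀ s : ℝ, 0 ≤ s → s ≤ g s)
    (hg0 : g 0 = 0)
    (hg_rc : Tendsto g (nhdsWithin 0 (Set.Ici 0)) (𝓝 0))
    (hiter : ∀ t : ℝ, 0 ≤ t → Tendsto (fun n => φ^[n] t) atTop (𝓝 0))
    (hT : ∀ x y, p (T x) (T y) ≤ φ (p x y)) :
    ∃ z : X, T z = z ∧ (∀ w : X, T w = w → w = z) ∧ p z z = 0 ∧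
      ∀ x : X, Tendsto (fun n => pS p (T^[n] x) z) atTop (𝓝 0) := by
  exact phi_contraction_zero_complete_general hp hcomp
    ⟨hφ_nonneg, fun s hs t _ hst => hφ_mono s t hs hst, hiter⟩ hT
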